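/- Let K > 0, T > 0, a ≥ 0, and let u : [0, T] → [0,∞) be continuous on [0,T], differentiable on (0,T), with u(0) = a and u'(t) ≤ K·u(t) − 2K·a·e^{−Kt}/(1 − e^{−2KT}) for all t ∈ (0,T). Then for every t ∈ [0,T], u(t) ≤ a·(e^{−Kt} − e^{−K(2T−t)})/(1 − e^{−2KT}) ≤ a; in particular u(T) = 0. -/

import Mathlib

/-!
The bound `a (e^{-Kt} - e^{-K(2T-t)}) / (1 - e^{-2KT})` equals `a sinh (K(T-t)) / sinh (KT)`. It
takes the values `a` at `0` and `0` at `T`, and it solves the differential inequality for `u` with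
equality. Hence the difference `w` of `u` and the bound satisfies `w' ≤ K w`, so that `e^{-Kt} w` is
nonincreasing; it vanishes at `0`, and therefore `w ≤ 0`.
-/

section LinearComparison

variable {D : Set ℝ} {Φ φ : ℝ → ℝ}

theorem antitoneOn_exp_neg_mul_of_deriv_le_mul {w w' : ℝ → ℝ} (hD : Convex ℝ D)
    (hΦ_cont : ContinuousOn Φ D) (hΦ : ∀ t ∈ interior D, HasDerivAt Φ (φ t) t)
    (hw_cont : ContinuousOn w D) (hw : ∀ t ∈ interior D, HasDerivAt w (w' t) t)
    (hle : ∀ t ∈ interior D, w' t ≤ φ t * w t) :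
    AntitoneOn (fun t ↦ Real.exp (-Φ t) * w t) D := by
  have hderiv : ∀ t ∈ interior D, HasDerivAt (fun t ↦ Real.exp (-Φ t) * w t)
      (Real.exp (-Φ t) * (w' t - φ t * w t)) t := fun t ht ↦
    ((hΦ t ht).fun_neg.exp.fun_mul (hw t ht)).congr_deriv (by ring)
  refine antitoneOn_of_hasDerivWithinAt_nonpos hD (hΦ_cont.fun_neg.rexp.mul hw_cont)
    (fun t ht ↦ (hderiv t ht).hasDerivWithinAt) fun t ht ↦ ?_
  exact mul_nonpos_of_nonneg_of_nonpos (Real.exp_pos _).le (sub_nonpos.mpr (hle t ht))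

theorem le_of_deriv_sub_mul_le_deriv_sub_mul {u u' v v' : ℝ → ℝ} {s t : ℝ} (hD : Convex ℝ D)
    (hΦ_cont : ContinuousOn Φ D) (hΦ : ∀ r ∈ interior D, HasDerivAt Φ (φ r) r)
    (hu_cont : ContinuousOn u D) (hu : ∀ r ∈ interior D, HasDerivAt u (u' r) r)
    (hv_cont : ContinuousOn v D) (hv : ∀ r ∈ interior D, HasDerivAt v (v' r) r)
    (hle : ∀ r ∈ interior D, u' r - φ r * u r ≤ v' r - φ r * v r)
    (hs : s ∈ D) (ht : t ∈ D) (hst : s ≤ t) (hsle : u s ≤ v s) : u t ≤ v t := by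
  have hanti : AntitoneOn (fun r ↦ Real.exp (-Φ r) * (u r - v r)) D :=
    antitoneOn_exp_neg_mul_of_deriv_le_mul hD hΦ_cont hΦ (hu_cont.sub hv_cont)
      (fun r hr ↦ (hu r hr).sub (hv r hr)) fun r hr ↦ by linarith [hle r hr]
  have hnonpos : Real.exp (-Φ t) * (u t - v t) ≤ 0 :=
    (hanti hs ht hst).trans
      (mul_nonpos_of_nonneg_of_nonpos (Real.exp_pos _).le (sub_nonpos.mpr hsle))
  exact sub_nonpos.mp (nonpos_of_mul_nonpos_right hnonpos (Real.exp_pos _))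

end LinearComparison

theorem exp_sub_exp_eq_two_mul_exp_mul_sinh (x y : ℝ) :
    Real.exp x - Real.exp y = 2 * Real.exp ((x + y) / 2) * Real.sinh ((x - y) / 2) := by
  have hx : Real.exp x = Real.exp ((x + y) / 2) * Real.exp ((x - y) / 2) := by
    rw [← Real.exp_add]
    ring_nf
  have hy : Real.exp y = Real.exp ((x + y) / 2) * Real.exp (-((x - y) / 2)) := by
    rw [← Real.exp_add]
    ring_nf
  rw [Real.sinh_eq, hx, hy]
  ring

theorem one_sub_exp_neg_two_mul_mul (K T : ℝ) :
    1 - Real.exp (-2 * K * T) = 2 * Real.exp (-(K * T)) * Real.sinh (K * T) := by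
  rw [← Real.exp_zero, exp_sub_exp_eq_two_mul_exp_mul_sinh]
  ring_nf

theorem sinh_mul_div_sinh_mul_le_one {K s T : ℝ} (hT : 0 ≤ T) (hsT : s ≤ T) :
    Real.sinh (K * s) / Real.sinh (K * T) ≤ 1 := by
  wlog hK : 0 ≤ K generalizing K
  · simpa only [neg_mul, Real.sinh_neg, neg_div_neg_eq] using this (K := -K) (by linarith)
  exact div_le_one_of_le₀ (Real.sinh_le_sinh.mpr (mul_le_mul_of_nonneg_left hsT hK))
    (Real.sinh_nonneg_iff.mpr (mul_nonneg hK hT))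

/-- The largest distance the coupling allows at time `t`: for `K ≠ 0` and `T > 0`, the solution of
`v' = K v - 2 K a e^{-Kt} / (1 - e^{-2KT})` with `v 0 = a` and `v T = 0`, written with hyperbolic
sines rather than the exponentials of the paper. -/
noncomputable def couplingBound (K T a t : ℝ) : ℝ :=
  a * (Real.sinh (K * (T - t)) / Real.sinh (K * T))

namespace couplingBound

theorem eq_exp (K T a t : ℝ) :
    couplingBound K T a t =
      a * (Real.exp (-K * t) - Real.exp (-K * (2 * T - t))) / (1 - Real.exp (-2 * K * T)) := by
  have hnum : Real.exp (-K * t) - Real.exp (-K * (2 * T - t)) =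
      2 * Real.exp (-(K * T)) * Real.sinh (K * (T - t)) := by
    rw [exp_sub_exp_eq_two_mul_exp_mul_sinh]
    ring_nf
  rw [couplingBound, hnum, one_sub_exp_neg_two_mul_mul, mul_div_assoc,
    mul_div_mul_left _ _ (by positivity)]

theorem apply_zero {K T : ℝ} (hK : K ≠ 0) (hT : T ≠ 0) (a : ℝ) : couplingBound K T a 0 = a := by
  have hsinh : Real.sinh (K * T) ≠ 0 := Real.sinh_ne_zero.mpr (mul_ne_zero hK hT)
  rw [couplingBound, sub_zero, div_self hsinh, mul_one]

theorem apply_terminal (K T a : ℝ) : couplingBound K T a T = 0 := by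
  simp [couplingBound]

theorem le_initial {K T a t : ℝ} (hT : 0 ≤ T) (ha : 0 ≤ a) (ht : 0 ≤ t) :
    couplingBound K T a t ≤ a :=
  mul_le_of_le_one_right ha (sinh_mul_div_sinh_mul_le_one hT (sub_le_self T ht))

theorem hasDerivAt (K T a t : ℝ) :
    HasDerivAt (couplingBound K T a)
      (K * couplingBound K T a t - 2 * K * a * Real.exp (-K * t) / (1 - Real.exp (-2 * K * T)))
      t := by
  have hinner : HasDerivAt (fun s ↦ K * (T - s)) (-K) t := by
    simpa using ((hasDerivAt_id t).const_sub T).const_mul K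
  have hdrift : 2 * K * a * Real.exp (-K * t) / (1 - Real.exp (-2 * K * T)) =
      K * a * (Real.cosh (K * (T - t)) + Real.sinh (K * (T - t))) / Real.sinh (K * T) := by
    have hexp : Real.exp (-K * t) = Real.exp (-(K * T)) * Real.exp (K * (T - t)) := by
      rw [← Real.exp_add]
      ring_nf
    rw [Real.cosh_add_sinh, one_sub_exp_neg_two_mul_mul, hexp,
      ← mul_div_mul_left (K * a * _) _ (by positivity : 2 * Real.exp (-(K * T)) ≠ 0)]
    ring
  refine ((hinner.sinh.div_const (Real.sinh (K * T))).const_mul a).congr_deriv ?_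
  rw [hdrift, couplingBound]
  ring

end couplingBound

theorem le_couplingBound {K T a t : ℝ} {u u' : ℝ → ℝ} (hK : K ≠ 0) (hT : 0 < T)
    (hu_cont : ContinuousOn u (Set.Icc 0 T)) (hu0 : u 0 ≤ a)
    (hu_deriv : ∀ t ∈ Set.Ioo 0 T, HasDerivAt u (u' t) t)
    (hu_ineq : ∀ t ∈ Set.Ioo 0 T,
      u' t ≤ K * u t - 2 * K * a * Real.exp (-K * t) / (1 - Real.exp (-2 * K * T)))
    (ht : t ∈ Set.Icc 0 T) : u t ≤ couplingBound K T a t := by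
  rw [← interior_Icc] at hu_deriv hu_ineq
  have hbound := couplingBound.hasDerivAt K T a
  refine le_of_deriv_sub_mul_le_deriv_sub_mul (Φ := fun s ↦ K * s) (φ := fun _ ↦ K)
    (convex_Icc 0 T) (by fun_prop) (fun s _ ↦ hasDerivAt_const_mul K) hu_cont hu_deriv
    (fun s _ ↦ (hbound s).continuousAt.continuousWithinAt) (fun s _ ↦ hbound s)
    (fun s hs ↦ ?_) (Set.left_mem_Icc.mpr hT.le) ht ht.1 ?_
  · linarith [hu_ineq s hs]
  · rwa [couplingBound.apply_zero hK hT.ne']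

theorem coupling_first_component_comparison_general {K T a : ℝ} {u u' : ℝ → ℝ}
    (hK : K ≠ 0) (hT : 0 < T) (ha : 0 ≤ a) (huT : 0 ≤ u T)
    (hu_cont : ContinuousOn u (Set.Icc 0 T)) (hu0 : u 0 ≤ a)
    (hu_deriv : ∀ t ∈ Set.Ioo 0 T, HasDerivAt u (u' t) t)
    (hu_ineq : ∀ t ∈ Set.Ioo 0 T,
      u' t ≤ K * u t - 2 * K * a * Real.exp (-K * t) / (1 - Real.exp (-2 * K * T))) :
    (∀ t ∈ Set.Icc 0 T,
        u t ≤ a * (Real.exp (-K * t) - Real.exp (-K * (2 * T - t)))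
                / (1 - Real.exp (-2 * K * T))
        ∧ a * (Real.exp (-K * t) - Real.exp (-K * (2 * T - t)))
                / (1 - Real.exp (-2 * K * T)) ≤ a)
    ∧ u T = 0 := by
  have hle : ∀ t ∈ Set.Icc 0 T, u t ≤ couplingBound K T a t := fun t ht ↦
    le_couplingBound hK hT hu_cont hu0 hu_deriv hu_ineq ht
  have huT_le : u T ≤ 0 :=
    (hle T (Set.right_mem_Icc.mpr hT.le)).trans_eq (couplingBound.apply_terminal K T a)
  simp only [← couplingBound.eq_exp]
  exact ⟨fun t ht ↦ ⟨hle t ht, couplingBound.le_initial hT.le ha ht.1⟩, huT_le.antisymm huT⟩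

/-- Deterministic comparison argument for the first coupling step (Proposition 2.1):
if `u(0) = a` and `u' ≤ K u − 2K a e^{−Kt}/(1 − e^{−2KT})` on `(0,T)`, then
`u(t) ≤ a (e^{−Kt} − e^{−K(2T−t)})/(1 − e^{−2KT}) ≤ a` on `[0,T]`; in particular `u(T) = 0`. -/
theorem coupling_first_component_comparison
    (K T a : ℝ) (hK : 0 < K) (hT : 0 < T) (ha : 0 ≤ a)
    (u u' : ℝ → ℝ)
    (hu_cont : ContinuousOn u (Set.Icc 0 T))
    (hu_nonneg : ∀ t ∈ Set.Icc 0 T, 0 ≤ u t)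
    (hu0 : u 0 = a)
    (hu_deriv : ∀ t ∈ Set.Ioo 0 T, HasDerivAt u (u' t) t)
    (hu_ineq : ∀ t ∈ Set.Ioo 0 T,
      u' t ≤ K * u t - 2 * K * a * Real.exp (-K * t) / (1 - Real.exp (-2 * K * T))) :
    (∀ t ∈ Set.Icc 0 T,
        u t ≤ a * (Real.exp (-K * t) - Real.exp (-K * (2 * T - t)))
                / (1 - Real.exp (-2 * K * T))
        ∧ a * (Real.exp (-K * t) - Real.exp (-K * (2 * T - t)))
                / (1 - Real.exp (-2 * K * T)) ≤ a)
    ∧ u T = 0 :=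
  coupling_first_component_comparison_general hK.ne' hT ha
    (hu_nonneg T (Set.right_mem_Icc.mpr hT.le)) hu_cont hu0.le hu_deriv hu_ineq
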